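/- Let F be a field and let m, n, r be integers with 2 ≤ m and 0 ≤ r ≤ n. Let A_1, …, A_m ⊆ [n] be sets of size at most r, and set E = ∪_{i∈[m]} {i}×A_i ⊆ [m]×[n]. Then E is independent in the tensor matroid T_{m,n}(2,r,F) if and only if the following three conditions hold: (1) |A_i ∩ A_j ∩ A_k| = 0 for all distinct i, j, k ∈ [m]; (2) for every k ∈ [m], ∑_{1 ≤ i < j ≤ m} |A_i ∩ A_j| + |A_k ∖ ∪_{i ∈ [m]∖{k}} A_i| ≤ r; (3) ∑_{i=1}^m |A_i| ≤ 2r. -/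

import Mathlib

open scoped Classical

noncomputable section

/-- The field of fractions of the polynomial ring over `F` in variables
`X i k` (`i ∈ [m]`, `k ∈ [s]`) and `Y j l` (`j ∈ [n]`, `l ∈ [r]`). -/
abbrev TField (F : Type*) [Field F] (m n s r : ℕ) :=
  FractionRing (MvPolynomial ((Fin m × Fin s) ⊕ (Fin n × Fin r)) F)

/-- The vector `u_i ⊗ v_j ∈ K_F^{[s]×[r]}` with `(k,l)`-entry `X_{ik} · Y_{jl}`. -/
noncomputable def tvec (F : Type*) [Field F] (m n s r : ℕ) (e : Fin m × Fin n) :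
    Fin s × Fin r → TField F m n s r := fun kl =>
  algebraMap (MvPolynomial ((Fin m × Fin s) ⊕ (Fin n × Fin r)) F) (TField F m n s r)
      (MvPolynomial.X (Sum.inl (e.1, kl.1))) *
  algebraMap (MvPolynomial ((Fin m × Fin s) ⊕ (Fin n × Fin r)) F) (TField F m n s r)
      (MvPolynomial.X (Sum.inr (e.2, kl.2)))

/-- `E` is independent in the tensor matroid `T_{m,n}(s,r,F)`: the family
`{u_i ⊗ v_j : (i,j) ∈ E}` is linearly independent over `K_F`. -/
def TensorIndep (F : Type*) [Field F] (m n s r : ℕ) (E : Set (Fin m × Fin n)) : Prop :=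
  LinearIndependent (TField F m n s r) (fun e : E => tvec F m n s r e)

/-- `E` is spanning in the tensor matroid `T_{m,n}(s,r,F)`: the family
`{u_i ⊗ v_j : (i,j) ∈ E}` spans `K_F^{[s]×[r]}`. -/
def TensorSpanning (F : Type*) [Field F] (m n s r : ℕ) (E : Set (Fin m × Fin n)) : Prop :=
  Submodule.span (TField F m n s r) (tvec F m n s r '' E) = ⊤

/-!
Suppose the tensors are independent. Since `∑ |A_i|` of them lie in a space of dimension `2r`,
condition (3) holds. The rows `i` meeting a column `x` have independent vectors `u_i ⊗ v_x`, hence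
independent `u_i ∈ K²`, so there are at most two of them, which is (1). For (2), fix a row `k` and
consider the columns `x` that are shared by two rows or exclusive to `k`: these are columns for
which `u_k` is a combination of the `u_i` with `x ∈ A_i`. So `u_k ⊗ v_x` lies in the span of the
tensors of column `x`; the vectors `v_x` of these columns are therefore independent in `K^r`.

Conversely, genericity of the `v_x` allows specialising them to standard basis vectors, that is,
colouring the columns with `r` colours; the tensors are then independent as soon as each colour
occurs in at most two cells, in distinct rows. Each shared column gets a colour of its own, and the
exclusive columns, listed row by row, get the remaining colours cyclically.
-/

open Finset

section BalancedColoring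

variable {β γ : Type*} [Fintype β]

lemma exists_equiv_fin_ordConnected (f : β → γ) :
    ∃ q : Fin (Fintype.card β) ≃ β, ∀ y, ((f ∘ q) ⁻¹' {y}).OrdConnected := by
  let _ : LinearOrder γ := linearOrderOfSTO WellOrderingRel
  let p := (Fintype.equivFin β).symm
  exact ⟨(Tuple.sort (f ∘ p)).trans p, fun y =>
    Set.ordConnected_singleton.preimage_mono (Tuple.monotone_sort (f ∘ p))⟩

lemma lt_add_of_ordConnected_of_card_fiber_le [DecidableEq γ] {N t : ℕ} {f : β → γ}
    {q : Fin N ≃ β} (hq : ∀ y, ((f ∘ q) ⁻¹' {y}).OrdConnected) (hf : ∀ y, #{x | f x = y} ≤ t)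
    {a b : Fin N} (hab : f (q a) = f (q b)) : (b : ℕ) < a + t := by
  have hmaps : Set.MapsTo q (Icc a b : Finset (Fin N)) ({x | f x = f (q b)} : Finset β) :=
    fun j hj => by simpa using (hq (f (q b))).out hab rfl (coe_Icc a b ▸ hj)
  have := (card_le_card_of_injOn q hmaps q.injective.injOn).trans (hf _)
  rw [Fin.card_Icc] at this
  omega

lemma exists_balanced_coloring [DecidableEq γ] {k t : ℕ} (f : β → γ) (hf : ∀ y, #{x | f x = y} ≤ t)
    (hβ : Fintype.card β ≤ k * t) :
    ∃ c : β → Fin t, (∀ y, Set.InjOn c (f ⁻¹' {y})) ∧ ∀ l, #{x | c x = l} ≤ k := by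
  -- List `β` fibre by fibre and colour it cyclically: a fibre takes up `≤ t` consecutive places.
  obtain ⟨q, hq⟩ := exists_equiv_fin_ordConnected f
  have ht (x : β) : 0 < t := (card_pos.2 ⟨x, by simp⟩).trans_le (hf (f x))
  refine ⟨fun x => ⟨q.symm x % t, Nat.mod_lt _ (ht x)⟩, fun y x hx x' hx' h => ?_, fun l => ?_⟩
  · have hxx' : f x = f x' := Eq.trans hx (Eq.symm hx')
    have hlt := lt_add_of_ordConnected_of_card_fiber_le hq hf (a := q.symm x) (b := q.symm x')
      (by simpa using hxx')
    have hgt := lt_add_of_ordConnected_of_card_fiber_le hq hf (a := q.symm x') (b := q.symm x)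
      (by simpa using hxx'.symm)
    have hmod : q.symm x ≡ q.symm x' [MOD t] := Fin.ext_iff.1 h
    exact q.symm.injective (Fin.ext (hmod.eq_of_abs_lt (by rw [abs_lt]; omega)))
  · rw [← card_range k]
    refine card_le_card_of_injOn (fun x => q.symm x / t) (fun x _ => ?_) fun x hx x' hx' h => ?_
    · exact mem_coe.2 (mem_range.2 (Nat.div_lt_of_lt_mul (by
        rw [mul_comm]; exact (q.symm x).isLt.trans_le hβ)))
    · have hmod : (q.symm x : ℕ) % t = q.symm x' % t := by
        rw [mem_coe, mem_filter_univ] at hx hx'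
        exact Fin.ext_iff.1 (hx.trans hx'.symm)
      refine q.symm.injective (Fin.ext ?_)
      rw [← Nat.div_add_mod (q.symm x) t, ← Nat.div_add_mod (q.symm x') t, hmod]
      simp only at h
      rw [h]

end BalancedColoring

section PairColoring

variable {ι κ L : Type*} [Fintype ι] [DecidableEq L] {A : ι → Finset κ}

/-- A colouring of the cells `(i, x)` of `⋃ i, {i} × A i` that depends only on the column `x`, whose
colour classes have at most two cells, lying in distinct rows. -/
structure IsPairColoring (c : (Σ i, A i) → L) : Prop where
  factorsThrough : c.FactorsThrough fun e => (e.2 : κ)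
  injOn_fst (l : L) : Set.InjOn Sigma.fst (c ⁻¹' {l})
  card_le (l : L) : #{e | c e = l} ≤ 2

lemma IsPairColoring.equiv_comp {L' : Type*} [DecidableEq L']
    {c : (Σ i, A i) → L} (hc : IsPairColoring c) (ε : L ≃ L') : IsPairColoring (ε ∘ c) where
  factorsThrough _ _ h := congrArg ε (hc.factorsThrough h)
  injOn_fst l := by
    rw [Set.preimage_comp, ← ε.image_symm_eq_preimage, Set.image_singleton]
    exact hc.injOn_fst (ε.symm l)
  card_le l := by simpa [← Equiv.eq_symm_apply] using hc.card_le (ε.symm l)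

end PairColoring

section Columns

variable {ι κ : Type*} [Fintype ι]

lemma forall_card_inter_inter_eq_zero_iff [DecidableEq κ] {A : ι → Finset κ} :
    (∀ i j k : ι, i ≠ j → i ≠ k → j ≠ k → #(A i ∩ A j ∩ A k) = 0) ↔
      ∀ x, #{i | x ∈ A i} ≤ 2 := by
  simp only [← not_lt, two_lt_card, mem_filter_univ, card_eq_zero, eq_empty_iff_forall_notMem,
    mem_inter]
  grind

variable [DecidableEq κ] (A : ι → Finset κ)

/-- The columns of `⋃ i, {i} × A i` that meet at least two rows. -/
def sharedColumns : Finset κ :=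
  univ.offDiag.biUnion fun p => A p.1 ∩ A p.2

/-- The columns of `⋃ i, {i} × A i` that meet row `k` and no other row. -/
def exclusiveColumns [DecidableEq ι] (k : ι) : Finset κ :=
  A k \ (univ.erase k).biUnion A

variable {A}

lemma mem_sharedColumns {x : κ} :
    x ∈ sharedColumns A ↔ ∃ i j, i ≠ j ∧ x ∈ A i ∧ x ∈ A j := by
  simp [sharedColumns]

lemma sdiff_sharedColumns [DecidableEq ι] (k : ι) :
    A k \ sharedColumns A = exclusiveColumns A k := by
  ext x
  simp only [exclusiveColumns, mem_sdiff, mem_sharedColumns, mem_biUnion, mem_erase]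
  grind

lemma card_sharedColumns {ι : Type*} [Fintype ι] [LinearOrder ι] {A : ι → Finset κ}
    (hA : ∀ x, #{i | x ∈ A i} ≤ 2) :
    #(sharedColumns A) = ∑ p : ι × ι with p.1 < p.2, #(A p.1 ∩ A p.2) := by
  have hordered : sharedColumns A =
      ({p : ι × ι | p.1 < p.2} : Finset (ι × ι)).biUnion fun p => A p.1 ∩ A p.2 := by
    ext x
    simp only [mem_sharedColumns, mem_biUnion, mem_filter_univ, mem_inter, Prod.exists]
    refine ⟨fun ⟨i, j, hij, hi, hj⟩ => ?_, fun ⟨i, j, hij, hx⟩ => ⟨i, j, hij.ne, hx⟩⟩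
    rcases hij.lt_or_gt with h | h
    exacts [⟨i, j, h, hi, hj⟩, ⟨j, i, h, hj, hi⟩]
  rw [hordered]
  refine card_biUnion fun ⟨i, j⟩ hij ⟨i', j'⟩ hij' hne => disjoint_left.2 fun x hx hx' => hne ?_
  rw [mem_coe, mem_filter_univ] at hij hij'
  rw [mem_inter] at hx hx'
  have hrows (k : ι) (hk : x ∈ A k) : k = i ∨ k = j := by
    by_contra! h
    have htriple := forall_card_inter_inter_eq_zero_iff.2 hA i j k hij.ne h.1.symm h.2.symm
    exact notMem_empty x (card_eq_zero.1 htriple ▸ mem_inter.2 ⟨mem_inter.2 hx, hk⟩)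
  have hi' := hrows i' hx'.1
  have hj' := hrows j' hx'.2
  grind

lemma two_mul_card_sharedColumns_add_le [DecidableEq ι] :
    2 * #(sharedColumns A) + ∑ i, #(exclusiveColumns A i) ≤ ∑ i, #(A i) := by
  have hshared : 2 * #(sharedColumns A) ≤ ∑ i, #(A i ∩ sharedColumns A) :=
    calc 2 * #(sharedColumns A) = ∑ x ∈ sharedColumns A, 2 := by
          rw [sum_const, smul_eq_mul, mul_comm]
      _ ≤ ∑ x ∈ sharedColumns A, #{i | x ∈ A i} := by
        refine sum_le_sum fun x hx => one_lt_card.2 ?_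
        obtain ⟨i, j, hij, hi, hj⟩ := mem_sharedColumns.1 hx
        exact ⟨i, by simpa, j, by simpa, hij⟩
      _ = ∑ i, #(A i ∩ sharedColumns A) := by
        simp_rw [inter_comm (A _), ← filter_mem_eq_inter]
        exact sum_card_bipartiteAbove_eq_sum_card_bipartiteBelow (fun x i => x ∈ A i)
  calc _ ≤ ∑ i, #(A i ∩ sharedColumns A) + ∑ i, #(exclusiveColumns A i) := by gcongr
    _ = ∑ i, #(A i) := by
      simp_rw [← sum_add_distrib, ← sdiff_sharedColumns, card_inter_add_card_sdiff]

variable (A) in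
/-- The cells `(i, x)` of `⋃ i, {i} × A i` whose column `x` is not shared. -/
abbrev ExclusiveCell : Type _ := {e : Σ i, A i // (e.2 : κ) ∉ sharedColumns A}

lemma card_exclusiveCell_row_le [DecidableEq ι] (i : ι) :
    #{e : ExclusiveCell A | e.1.1 = i} ≤ #(exclusiveColumns A i) := by
  refine card_le_card_of_injOn (fun e => (e.1.2 : κ)) (fun e he => ?_) fun e he e' he' h => ?_
  · rw [mem_coe, mem_filter_univ] at he
    rw [← sdiff_sharedColumns, ← he]
    exact mem_coe.2 (mem_sdiff.2 ⟨e.1.2.2, e.2⟩)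
  · rw [mem_coe, mem_filter_univ] at he he'
    exact Subtype.ext (Sigma.subtype_ext (he.trans he'.symm) h)

lemma card_exclusiveCell_le [DecidableEq ι] :
    Fintype.card (ExclusiveCell A) ≤ ∑ i, #(exclusiveColumns A i) := by
  rw [← card_univ, card_eq_sum_card_fiberwise (f := fun e => e.1.1) (t := univ) (by simp)]
  exact sum_le_sum fun i _ => card_exclusiveCell_row_le i

/-- The extension of a colouring of the exclusive cells to all cells that gives every shared
column a colour of its own. -/
def extendColoring {C : Type*} (b : ExclusiveCell A → C) (e : Σ i, A i) : sharedColumns A ⊕ C :=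
  if he : (e.2 : κ) ∈ sharedColumns A then .inl ⟨e.2, he⟩ else .inr (b ⟨e, he⟩)

section ExtendColoring

variable {C : Type*} {b : ExclusiveCell A → C} {e : Σ i, A i}

lemma extendColoring_eq_inl_iff {x : sharedColumns A} :
    extendColoring b e = .inl x ↔ (e.2 : κ) = x := by
  by_cases he : (e.2 : κ) ∈ sharedColumns A
  · simp [extendColoring, he, Subtype.ext_iff]
  · simpa [extendColoring, he] using ne_of_mem_of_not_mem x.2 he |>.symm

lemma extendColoring_eq_inr_iff {q : C} :
    extendColoring b e = .inr q ↔ ∃ he, b ⟨e, he⟩ = q := by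
  by_cases he : (e.2 : κ) ∈ sharedColumns A <;> simp [extendColoring, he]

lemma extendColoring_factorsThrough :
    (extendColoring b).FactorsThrough fun e => (e.2 : κ) := by
  intro e e' (h : (e.2 : κ) = e'.2)
  by_cases he : (e.2 : κ) ∈ sharedColumns A
  · have hx : extendColoring b e = .inl ⟨e.2, he⟩ := extendColoring_eq_inl_iff.2 rfl
    exact hx.trans (extendColoring_eq_inl_iff.2 h.symm).symm
  · have hrow : e.1 = e'.1 := by
      by_contra hne
      exact he (mem_sharedColumns.2 ⟨e.1, e'.1, hne, e.2.2, h ▸ e'.2.2⟩)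
    rw [Sigma.subtype_ext hrow h]

lemma isPairColoring_extendColoring [DecidableEq C] (hA : ∀ x, #{i | x ∈ A i} ≤ 2)
    (hb_inj : ∀ i, Set.InjOn b ((fun e => e.1.1) ⁻¹' {i})) (hb_card : ∀ q, #{e | b e = q} ≤ 2) :
    IsPairColoring (extendColoring b) := by
  have hinj_inl (x : sharedColumns A) :
      Set.InjOn Sigma.fst (extendColoring b ⁻¹' {.inl x}) := fun e he e' he' hrow =>
    Sigma.subtype_ext hrow ((extendColoring_eq_inl_iff.1 he).trans
      (extendColoring_eq_inl_iff.1 he').symm)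
  refine ⟨extendColoring_factorsThrough, ?_, ?_⟩
  · rintro (x | q)
    · exact hinj_inl x
    · intro e he e' he' hrow
      obtain ⟨he, hq⟩ := extendColoring_eq_inr_iff.1 he
      obtain ⟨he', hq'⟩ := extendColoring_eq_inr_iff.1 he'
      exact congrArg Subtype.val (hb_inj e'.1 hrow rfl (hq.trans hq'.symm))
  · rintro (x | q)
    · refine (card_le_card_of_injOn Sigma.fst (fun e he => ?_) ?_).trans (hA x)
      · rw [mem_coe, mem_filter_univ] at he ⊢
        exact extendColoring_eq_inl_iff.1 he ▸ e.2.2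
      · simpa [Set.preimage] using hinj_inl x
    · refine le_trans (card_le_card fun e he => ?_)
        ((card_image_le (f := Subtype.val)).trans (hb_card q))
      rw [mem_filter_univ] at he
      obtain ⟨he, hq⟩ := extendColoring_eq_inr_iff.1 he
      exact mem_image.2 ⟨⟨e, he⟩, by simpa using hq, rfl⟩

end ExtendColoring

lemma exists_isPairColoring [DecidableEq ι] {L : Type*} [Fintype L] [DecidableEq L]
    (hA : ∀ x, #{i | x ∈ A i} ≤ 2)
    (hexcl : ∀ i, #(sharedColumns A) + #(exclusiveColumns A i) ≤ Fintype.card L)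
    (hsum : ∑ i, #(A i) ≤ 2 * Fintype.card L) :
    ∃ c : (Σ i, A i) → L, IsPairColoring c := by
  have hcount := two_mul_card_sharedColumns_add_le (A := A)
  obtain ⟨b, hb_inj, hb_card⟩ := exists_balanced_coloring (k := 2)
    (t := Fintype.card L - #(sharedColumns A)) (fun e : ExclusiveCell A => e.1.1)
    (fun i => (card_exclusiveCell_row_le i).trans (Nat.le_sub_of_add_le' (hexcl i)))
    (card_exclusiveCell_le.trans (by omega))
  exact ⟨_, (isPairColoring_extendColoring hA hb_inj hb_card).equiv_comp
    (Fintype.equivOfCardEq (by simp; omega))⟩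

end Columns

section Specialization

open MvPolynomial

variable {ε α : Type*}

lemma exists_det_submatrix_ne_zero [Fintype ε] [DecidableEq ε] [Finite α] {K : Type*} [Field K]
    (M : Matrix ε α K) (hM : LinearIndependent K M.row) :
    ∃ f : ε → α, (M.submatrix id f).det ≠ 0 := by
  cases nonempty_fintype α
  obtain ⟨κ, a, ha, hspan, hli⟩ := exists_linearIndependent' K M.col
  have : Finite κ := .of_injective a ha
  cases nonempty_fintype κ
  have hcard : Fintype.card κ = Fintype.card ε := by
    rw [← hM.rank_matrix, M.rank_eq_finrank_span_cols, ← hspan, finrank_span_eq_card hli]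
  let g := Fintype.equivOfCardEq hcard.symm
  refine ⟨a ∘ g, ?_⟩
  rw [← isUnit_iff_ne_zero, ← Matrix.isUnit_iff_isUnit_det,
    ← Matrix.linearIndependent_cols_iff_isUnit]
  exact hli.comp g g.injective

lemma linearIndependent_aeval_of_linearIndependent_aeval [Finite ε] [Finite α]
    {σ R K L : Type*} [CommRing R] [Field K] [Algebra R K] [Field L] [Algebra R L]
    {y : σ → K} (hy : AlgebraicIndependent R y) (z : σ → L) (W : ε → α → MvPolynomial σ R)
    (hW : LinearIndependent L fun e a => aeval z (W e a)) :
    LinearIndependent K fun e a => aeval y (W e a) := by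
  cases nonempty_fintype ε
  -- A minor that is nonzero at `z` is a nonzero polynomial, so it is nonzero at the generic `y`.
  obtain ⟨f, hf⟩ := exists_det_submatrix_ne_zero (Matrix.of fun e a => aeval z (W e a)) hW
  let D : Matrix ε ε (MvPolynomial σ R) := (Matrix.of W).submatrix id f
  have hDz : aeval z D.det ≠ 0 := by rwa [AlgHom.map_det]
  have hDy : aeval y D.det ≠ 0 := by
    rw [map_ne_zero_iff _ hy]
    exact fun h => hDz (by rw [h, map_zero])
  rw [AlgHom.map_det] at hDy
  exact .of_comp (LinearMap.funLeft K K f) (Matrix.linearIndependent_rows_of_det_ne_zero hDy)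

lemma linearIndepOn_of_algebraicIndependent {ι F K : Type*} [Field F] [Field K] [Algebra F K]
    [Fintype α] {x : ι → α → K} (hx : AlgebraicIndependent F fun p : ι × α => x p.1 p.2)
    {s : Finset ι} (hs : #s ≤ Fintype.card α) : LinearIndepOn K x s := by
  obtain ⟨g⟩ : Nonempty (s ↪ α) := Function.Embedding.nonempty_of_card_le (by simpa)
  let z (p : ι × α) : F := if h : p.1 ∈ s then (Pi.single (g ⟨p.1, h⟩) 1 : α → F) p.2 else 0
  have hz : LinearIndependent F fun (i : s) a => aeval z (X (R := F) (i.1, a)) := by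
    simp only [aeval_X, z, Subtype.coe_eta, SetLike.coe_mem, dite_true]
    exact (Pi.linearIndependent_single_one α F).comp g g.injective
  have hxs := linearIndependent_aeval_of_linearIndependent_aeval hx z _ hz
  simp only [aeval_X] at hxs
  exact hxs

end Specialization

/-- The pure tensor `a ⊗ b`, as a bilinear map in coordinates. -/
def tensorVec {α β K : Type*} [Field K] : (α → K) →ₗ[K] (β → K) →ₗ[K] (α × β → K) :=
  LinearMap.mk₂ K (fun a b p => a p.1 * b p.2)
    (fun _ _ _ => by ext; simp [add_mul]) (fun _ _ _ => by ext; simp [mul_assoc])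
    (fun _ _ _ => by ext; simp [mul_add]) (fun _ _ _ => by ext; simp [mul_left_comm])

section TensorVec

open MvPolynomial

variable {α β K ε : Type*} [Field K]

@[simp]
lemma tensorVec_apply (a : α → K) (b : β → K) (p : α × β) : tensorVec a b p = a p.1 * b p.2 :=
  rfl

lemma tensorVec_ne_zero {a : α → K} {b : β → K} (ha : a ≠ 0) (hb : b ≠ 0) :
    tensorVec a b ≠ 0 := by
  obtain ⟨k, hk⟩ := Function.ne_iff.1 ha
  obtain ⟨l, hl⟩ := Function.ne_iff.1 hb
  exact Function.ne_iff.2 ⟨(k, l), mul_ne_zero hk hl⟩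

lemma linearIndependent_tensorVec_single [DecidableEq β] (a : ε → α → K) (c : ε → β)
    (h : ∀ l, LinearIndepOn K a (c ⁻¹' {l})) :
    LinearIndependent K fun e => tensorVec (a e) (Pi.single (c e) 1) := by
  rw [linearIndependent_iff']
  intro s g hg e he
  have hclass : ∑ e' ∈ s with c e' = c e, g e' • a e' = 0 := by
    ext k
    have := congrFun hg (k, c e)
    simpa [sum_filter, Pi.single_apply, eq_comm] using this
  exact linearIndepOn_iff'.1 (h (c e)) _ g (by simp [Set.subset_def]) hclass e (by simp [he])

lemma linearIndependent_tensorVec_of_specialization {κ R : Type*} [Finite ε] [Finite α] [Finite β]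
    [CommRing R] [Algebra R K] {u : ε → α → K} (hu : ∀ e k, u e k ∈ (algebraMap R K).range)
    {v : κ → β → K} (hv : AlgebraicIndependent R fun p : κ × β => v p.1 p.2) (w : κ → β → K)
    (col : ε → κ) (h : LinearIndependent K fun e => tensorVec (u e) (w (col e))) :
    LinearIndependent K fun e => tensorVec (u e) (v (col e)) := by
  choose u' hu' using hu
  have hcoord (y : κ → β → K) :
      (fun e => tensorVec (u e) (y (col e))) = fun e (p : α × β) =>
        aeval (fun q : κ × β => y q.1 q.2) (C (u' e p.1) * X (col e, p.2)) := by
    ext e p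
    simp [hu']
  rw [hcoord] at h ⊢
  exact linearIndependent_aeval_of_linearIndependent_aeval hv _ _ h

end TensorVec

section Necessity

variable {ι κ α β K : Type*} [Field K] {A : ι → Finset κ}
  {u : ι → α → K} {v : κ → β → K}

lemma card_rows_le_of_linearIndependent_tensorVec [Fintype ι] [DecidableEq κ] [Fintype α]
    (h : LinearIndependent K fun e : Σ i, A i => tensorVec (u e.1) (v e.2)) (x : κ) :
    #{i | x ∈ A i} ≤ Fintype.card α := by
  let cell (i : {i // x ∈ A i}) : Σ i, A i := ⟨i, x, i.2⟩
  have hcell : cell.Injective := fun i j hij => Subtype.ext (congrArg Sigma.fst hij)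
  have hrows : LinearIndependent K fun i : {i // x ∈ A i} => u i :=
    .of_comp (tensorVec.flip (v x)) (h.comp cell hcell)
  simpa [Fintype.card_subtype] using hrows.fintype_card_le_finrank

lemma card_columns_le_of_linearIndependent_tensorVec [Fintype β]
    (h : LinearIndependent K fun e : Σ i, A i => tensorVec (u e.1) (v e.2)) {a : α → K}
    (ha : a ≠ 0) {C : Finset κ} (hC : ∀ x ∈ C, a ∈ Submodule.span K (u '' {i | x ∈ A i})) :
    #C ≤ Fintype.card β := by
  let w (e : Σ i, A i) := tensorVec (u e.1) (v e.2)
  let S (x : C) : Submodule K (α × β → K) := .span K (w '' {e | (e.2 : κ) = x})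
  have hS : iSupIndep S := by
    intro x
    have hdisj : Disjoint {e : Σ i, A i | (e.2 : κ) = x}
        (⋃ (y) (_ : y ≠ x), {e | (e.2 : κ) = y}) := by
      simp only [Set.disjoint_left, Set.mem_iUnion]
      rintro e he ⟨y, hyx, hey⟩
      exact hyx (Subtype.ext (hey.symm.trans he))
    simpa only [S, Set.image_iUnion, Submodule.span_iUnion] using h.disjoint_span_image hdisj
  have hmem (x : C) : tensorVec a (v x) ∈ S x := by
    refine (Submodule.span_mono ?_) (Submodule.apply_mem_span_image_of_mem_span
      (tensorVec.flip (v x)) (hC x x.2))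
    rintro _ ⟨_, ⟨i, hi, rfl⟩, rfl⟩
    exact ⟨⟨i, x, hi⟩, rfl, rfl⟩
  have hne (x : C) : tensorVec a (v x) ≠ 0 := by
    have hrow : ∃ i, (x : κ) ∈ A i := by
      by_contra! hx
      exact ha (by simpa [hx] using hC x x.2)
    obtain ⟨i, hi⟩ := hrow
    refine tensorVec_ne_zero ha fun hv => h.ne_zero ⟨i, x, hi⟩ ?_
    simp [hv]
  have hcols : LinearIndependent K fun x : C => v x :=
    .of_comp (tensorVec a) (hS.linearIndependent S hmem hne)
  simpa using hcols.fintype_card_le_finrank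

lemma sum_card_le_of_linearIndependent_tensorVec [Fintype ι] [Fintype α] [Fintype β]
    (h : LinearIndependent K fun e : Σ i, A i => tensorVec (u e.1) (v e.2)) :
    ∑ i, #(A i) ≤ Fintype.card α * Fintype.card β := by
  simpa using h.fintype_card_le_finrank

end Necessity

section TwoRows

variable {ι κ L R K : Type*} [Fintype ι] [Field K]
  {A : ι → Finset κ} {u : ι → Fin 2 → K} {v : κ → L → K}

lemma card_sharedColumns_add_card_exclusiveColumns_le [Fintype L] [DecidableEq ι] [DecidableEq κ]
    (hu : ∀ s : Finset ι, #s ≤ 2 → LinearIndepOn K u s)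
    (h : LinearIndependent K fun e : Σ i, A i => tensorVec (u e.1) (v e.2)) (k : ι) :
    #(sharedColumns A) + #(exclusiveColumns A k) ≤ Fintype.card L := by
  have hdisj : Disjoint (sharedColumns A) (exclusiveColumns A k) := by
    rw [← sdiff_sharedColumns]
    exact disjoint_sdiff
  rw [← card_union_of_disjoint hdisj]
  refine card_columns_le_of_linearIndependent_tensorVec h (a := u k) ?_ fun x hx => ?_
  · exact (hu {k} (by simp)).ne_zero (by simp)
  rcases mem_union.1 hx with hx | hx
  · obtain ⟨i, j, hij, hi, hj⟩ := mem_sharedColumns.1 hx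
    have hpair := hu {i, j} card_le_two
    have htop := hpair.span_eq_top_of_card_eq_finrank' (by simp [hij])
    have hle := Submodule.span_mono (R := K) (s := u '' ({i, j} : Finset ι))
      (t := u '' {i | x ∈ A i}) (Set.image_mono (by simp [Set.insert_subset_iff, hi, hj]))
    rw [Set.image_eq_range] at hle
    exact hle (htop ▸ Submodule.mem_top)
  · exact Submodule.subset_span ⟨k, (mem_sdiff.1 hx).1, rfl⟩

lemma linearIndependent_tensorVec_of_isPairColoring [Finite L] [DecidableEq L] [CommRing R]
    [Algebra R K] (hu : ∀ s : Finset ι, #s ≤ 2 → LinearIndepOn K u s)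
    (huR : ∀ i k, u i k ∈ (algebraMap R K).range)
    (hv : AlgebraicIndependent R fun p : κ × L => v p.1 p.2)
    {c : (Σ i, A i) → L} (hc : IsPairColoring c) :
    LinearIndependent K fun e : Σ i, A i => tensorVec (u e.1) (v e.2) := by
  let w : κ → L → K :=
    Function.extend (fun e : Σ i, A i => (e.2 : κ)) ((Pi.single · 1) ∘ c) 0
  have hw (e : Σ i, A i) : w e.2 = Pi.single (c e) 1 :=
    (hc.factorsThrough.comp_left _).extend_apply _ e
  refine linearIndependent_tensorVec_of_specialization (u := fun e : Σ i, A i => u e.1)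
    (fun e => huR e.1) hv w (fun e => (e.2 : κ)) ?_
  simp only [hw]
  refine linearIndependent_tensorVec_single _ c fun l => ?_
  have hrows := hu (({e | c e = l} : Finset (Σ i, A i)).image Sigma.fst)
    (card_image_le.trans (hc.card_le l))
  have hclass : (({e | c e = l} : Finset (Σ i, A i)) : Set (Σ i, A i)) = c ⁻¹' {l} := by
    ext; simp
  rw [coe_image, hclass] at hrows
  exact hrows.comp_of_image (hc.injOn_fst l)

end TwoRows

theorem case_s_eq_two_general {ι κ L R K : Type*} [Fintype ι] [LinearOrder ι] [DecidableEq κ]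
    [Fintype L] [CommRing R] [Field K] [Algebra R K] {u : ι → Fin 2 → K} {v : κ → L → K}
    (hu : ∀ s : Finset ι, #s ≤ 2 → LinearIndepOn K u s)
    (huR : ∀ i k, u i k ∈ (algebraMap R K).range)
    (hv : AlgebraicIndependent R fun p : κ × L => v p.1 p.2) (A : ι → Finset κ) :
    LinearIndependent K (fun e : Σ i, A i => tensorVec (u e.1) (v e.2)) ↔
      (∀ i j k : ι, i ≠ j → i ≠ k → j ≠ k → #(A i ∩ A j ∩ A k) = 0) ∧
      (∀ k, (∑ p : ι × ι with p.1 < p.2, #(A p.1 ∩ A p.2)) +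
        #(A k \ (univ.erase k).biUnion A) ≤ Fintype.card L) ∧
      ∑ i, #(A i) ≤ 2 * Fintype.card L := by
  rw [forall_card_inter_inter_eq_zero_iff]
  refine ⟨fun h => ?_, fun ⟨hrows, hcolumns, hsum⟩ => ?_⟩
  · have hrows (x : κ) : #{i | x ∈ A i} ≤ 2 := by
      simpa using card_rows_le_of_linearIndependent_tensorVec h x
    rw [← card_sharedColumns hrows]
    exact ⟨hrows, card_sharedColumns_add_card_exclusiveColumns_le hu h,
      by simpa using sum_card_le_of_linearIndependent_tensorVec h⟩
  · rw [← card_sharedColumns hrows] at hcolumns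
    obtain ⟨c, hc⟩ := exists_isPairColoring hrows hcolumns hsum
    exact linearIndependent_tensorVec_of_isPairColoring hu huR hv hc

section TensorMatroid

variable (F : Type*) [Field F] (m n s r : ℕ)

/-- The totally generic vector `u_i ∈ K_F^s`, the left factor of `tvec`. -/
def genericRow (i : Fin m) (k : Fin s) : TField F m n s r :=
  algebraMap (MvPolynomial ((Fin m × Fin s) ⊕ (Fin n × Fin r)) F) _ (.X (Sum.inl (i, k)))

/-- The totally generic vector `v_j ∈ K_F^r`, the right factor of `tvec`. -/
def genericColumn (j : Fin n) (l : Fin r) : TField F m n s r :=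
  algebraMap (MvPolynomial ((Fin m × Fin s) ⊕ (Fin n × Fin r)) F) _ (.X (Sum.inr (j, l)))

lemma algebraicIndependent_sumElim_generic :
    AlgebraicIndependent F (Sum.elim (fun p : Fin m × Fin s => genericRow F m n s r p.1 p.2)
      fun p : Fin n × Fin r => genericColumn F m n s r p.1 p.2) := by
  have hX := (MvPolynomial.algebraicIndependent_X ((Fin m × Fin s) ⊕ (Fin n × Fin r)) F).map'
    (f := IsScalarTower.toAlgHom F _ (TField F m n s r)) (IsFractionRing.injective _ _)
  convert hX using 1
  ext (p | p) <;> rfl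

lemma linearIndepOn_genericRow {S : Finset (Fin m)} (hS : #S ≤ s) :
    LinearIndepOn (TField F m n s r) (genericRow F m n s r) S := by
  have hrow : AlgebraicIndependent F fun p : Fin m × Fin s => genericRow F m n s r p.1 p.2 :=
    (algebraicIndependent_sumElim_generic F m n s r).comp Sum.inl Sum.inl_injective
  exact linearIndepOn_of_algebraicIndependent hrow (by simpa using hS)

lemma genericRow_mem_range_algebraMap_adjoin (i : Fin m) (k : Fin s) :
    genericRow F m n s r i k ∈ (algebraMap
      (Algebra.adjoin F (Set.range fun p : Fin m × Fin s => genericRow F m n s r p.1 p.2))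
      (TField F m n s r)).range :=
  ⟨⟨_, Algebra.subset_adjoin ⟨(i, k), rfl⟩⟩, rfl⟩

lemma algebraicIndependent_adjoin_genericColumn :
    AlgebraicIndependent
      (Algebra.adjoin F (Set.range fun p : Fin m × Fin s => genericRow F m n s r p.1 p.2))
      fun p : Fin n × Fin r => genericColumn F m n s r p.1 p.2 := by
  refine (AlgebraicIndependent.sumElim_iff.1 ?_).2
  simpa using (algebraicIndependent_sumElim_generic F m n s r).comp Sum.swap
    Sum.swap_leftInverse.injective

variable {m n} in
lemma tensorIndep_iff_linearIndependent_tensorVec (A : Fin m → Finset (Fin n)) :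
    TensorIndep F m n s r {p | p.2 ∈ A p.1} ↔
      LinearIndependent (TField F m n s r) fun e : Σ i, A i =>
        tensorVec (genericRow F m n s r e.1) (genericColumn F m n s r e.2) :=
  linearIndependent_equiv' (Equiv.subtypeProdEquivSigmaSubtype fun i j => j ∈ A i) rfl

end TensorMatroid

theorem case_s_eq_two (F : Type*) [Field F] (m n r : ℕ) (hm : 2 ≤ m) (hr : r ≤ n)
    (A : Fin m → Finset (Fin n)) (hA : ∀ i, (A i).card ≤ r) :
    TensorIndep F m n 2 r {p : Fin m × Fin n | p.2 ∈ A p.1} ↔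
      ((∀ i j k : Fin m, i ≠ j → i ≠ k → j ≠ k → (A i ∩ A j ∩ A k).card = 0) ∧
       (∀ k : Fin m,
          (∑ p ∈ Finset.univ.filter (fun p : Fin m × Fin m => p.1 < p.2),
              (A p.1 ∩ A p.2).card) +
            (A k \ (Finset.univ.erase k).biUnion A).card ≤ r) ∧
       ∑ i, (A i).card ≤ 2 * r) := by
  rw [tensorIndep_iff_linearIndependent_tensorVec]
  simpa using case_s_eq_two_general (fun _ => linearIndepOn_genericRow F m n 2 r)
    (genericRow_mem_range_algebraMap_adjoin F m n 2 r)
    (algebraicIndependent_adjoin_genericColumn F m n 2 r) A
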